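/- Let I ⊂ S be a monomial ideal generated in degree d with minimal monomial generating set B = G(I), let <^# be a monomial order on R = K[{T_u}_{u∈B}] and <_σ a monomial order on S, and suppose B satisfies the σ-exchange property with respect to <^#. Let G_0 be a Gröbner basis of the toric ideal J = ker π ⊂ R with respect to <^#. Then the set consisting of G_0 together with all binomials x_i T_u − x_j T_v ∈ P = ker φ with x_i >_σ x_j (u, v ∈ B) is a Gröbner basis of P with respect to the product order <_σ^# on 𝒯 = K[x_1,…,x_n, {T_u}_{u∈B}], i.e., for every nonzero f ∈ P the <_σ^#-leading monomial of f is divisible by the leading monomial of some element of this set. -/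

import Mathlib

/-!
Both `π` and `φ` send monomials to monomials, so every monomial in the support of an element of
the kernel shares its image with another monomial of that support
(`exists_ne_mem_support_of_apply_eq_zero`).

Let `x^a T^e` be the leading monomial of a nonzero `f ∈ P`. If `T^e` is not standard for `J`, the
leading monomial of an element of `G₀` divides `T^e`. Otherwise `f` contains a smaller monomial
`x^b T^{e'}` with the same image under `φ`. The possibility `a = b`, `T^{e'} < T^e` is excluded,
because the binomial `T^e - T^{e'} ∈ J` would make `T^e` nonstandard. Hence `x^b <_σ x^a`, and
`T^{e'}` may be replaced by the smallest monomial in its fiber, which is standard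
(`exists_isStdMon`). Comparing `x^a π(T^e) = x^b π(T^{e'})` gives `π(T^e) <_σ π(T^{e'})`, and the
exchange property yields `q`, `j` and a factor `T_u` of `T^e` such that
`x_q T_u - x_j T_{x_q u / x_j} ∈ P`, with leading monomial `x_q T_u`. Finally `x_q ∣ x^a`, because
the exponent of `x_q` is smaller in `π(T^e)` than in `π(T^{e'})`.
-/


/-- Monomials of `K[x_1,…,x_n]`, encoded by their exponent vectors (`x_1` ↔ index `0`). -/
abbrev Mon (n : ℕ) := Fin n →₀ ℕ

/-- Total degree of a monomial. -/
def mdeg {n : ℕ} (m : Mon n) : ℕ := ∑ i, m i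

/-- `m <_lex m'` (so `m' >_lex m`) with `x_1 > x_2 > ⋯ > x_n`: at the first index where the
exponent vectors differ, `m'` has the larger exponent. -/
def LexLT {n : ℕ} (m m' : Mon n) : Prop :=
  ∃ i : Fin n, (∀ j, j < i → m j = m' j) ∧ m i < m' i

/-- `m ≤_lex m'`. -/
def LexLE {n : ℕ} (m m' : Mon n) : Prop := m = m' ∨ LexLT m m'

/-- `m >_revlex m'` for monomials of equal degree: at the last index where the exponent
vectors differ, `m` has the smaller exponent. -/
def RevLexGT {n : ℕ} (m m' : Mon n) : Prop :=
  ∃ s : Fin n, (∀ t, s < t → m t = m' t) ∧ m s < m' s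

/-- The decreasing revlexicographic order on monomials: `m <_σ m'` iff `deg m < deg m'`, or
the degrees agree and `m >_revlex m'`. -/
def DecRevLexLT {n : ℕ} (m m' : Mon n) : Prop :=
  mdeg m < mdeg m' ∨ (mdeg m = mdeg m' ∧ RevLexGT m m')

/-- The lexsegment set `L(u,v) = {w ∈ M_d : u ≥_lex w ≥_lex v}`. -/
def LSeg {n : ℕ} (u v : Mon n) (d : ℕ) : Set (Mon n) :=
  {w | mdeg w = d ∧ LexLE w u ∧ LexLE v w}

/-- `A` is a lexsegment set inside `M_e`. -/
def IsLexSegmentSet {n : ℕ} (A : Set (Mon n)) (e : ℕ) : Prop :=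
  ∃ u v : Mon n, mdeg u = e ∧ mdeg v = e ∧ LexLE v u ∧ A = LSeg u v e

/-- `(L(u,v))` is a completely lexsegment ideal: for every `k ≥ 0` the `k`-th shadow
`{m·w : m ∈ M_k, w ∈ L(u,v)}` is a lexsegment set in `M_{d+k}`. -/
def IsCompletelyLex {n : ℕ} (u v : Mon n) (d : ℕ) : Prop :=
  ∀ k : ℕ,
    IsLexSegmentSet {w | ∃ m w₀, mdeg m = k ∧ w₀ ∈ LSeg u v d ∧ w = m + w₀} (d + k)

/-- The set of products of `N` monomials from `B`; for `B` a set of monomials of a fixed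
degree `d` this is the minimal monomial generating set of `I^N`, `I = (B)`. -/
def prodSet {n : ℕ} (B : Set (Mon n)) (N : ℕ) : Set (Mon n) :=
  {m | ∃ f : Fin N → Mon n, (∀ i, f i ∈ B) ∧ m = ∑ i, f i}

/-- The equigenerated monomial ideal with (minimal) monomial generating set `G` has linear
quotients with respect to the order given by `prec` (`prec a b` = "`a` is listed before
`b`"): for generators `u_j` before `u_i` there are a generator `u_k` before `u_i` and a
variable `x_q` with `u_k / gcd(u_k,u_i) = x_q` and `x_q ∣ u_j / gcd(u_j,u_i)`. -/
def LinQuotOrder {n : ℕ} (G : Set (Mon n)) (prec : Mon n → Mon n → Prop) : Prop :=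
  ∀ uj ∈ G, ∀ ui ∈ G, prec uj ui →
    ∃ uk ∈ G, prec uk ui ∧ ∃ q : Fin n,
      (∀ p : Fin n, p ≠ q → uk p ≤ ui p) ∧ uk q = ui q + 1 ∧ ui q < uj q

/-- The equigenerated monomial ideal with minimal monomial generating set `G` has linear
quotients (with respect to some linear order of the generators). -/
def HasLinQuot {n : ℕ} (G : Set (Mon n)) : Prop :=
  ∃ prec : Mon n → Mon n → Prop,
    (∀ a ∈ G, ¬ prec a a) ∧
    (∀ a ∈ G, ∀ b ∈ G, ∀ c ∈ G, prec a b → prec b c → prec a c) ∧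
    (∀ a ∈ G, ∀ b ∈ G, a ≠ b → prec a b ∨ prec b a) ∧
    LinQuotOrder G prec
/-- A monomial order on a polynomial ring with variables indexed by `α`, given as a strict
total order on exponent vectors which is compatible with multiplication of monomials and
for which `1` is the smallest monomial. -/
structure MonOrd (α : Type*) where
  lt : (α →₀ ℕ) → (α →₀ ℕ) → Prop
  irrefl : ∀ a, ¬ lt a a
  trans : ∀ a b c, lt a b → lt b c → lt a c
  total : ∀ a b, a ≠ b → lt a b ∨ lt b a
  add_right : ∀ a b c, lt a b → lt (a + c) (b + c)
  zero_lt : ∀ a, a ≠ 0 → lt 0 a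

/-- The map `π : R = K[{T_u}_{u ∈ B}] → S`, `T_u ↦ u`. -/
noncomputable def piB {n : ℕ} (K : Type*) [Field K] (B : Set (Mon n)) :
    MvPolynomial ↥B K →ₐ[K] MvPolynomial (Fin n) K :=
  MvPolynomial.aeval (fun u : ↥B => MvPolynomial.monomial (u : Mon n) (1 : K))

/-- The toric ideal `J = ker π` of `K[B]`. -/
noncomputable def toricJ {n : ℕ} (K : Type*) [Field K] (B : Set (Mon n)) :
    Ideal (MvPolynomial ↥B K) :=
  RingHom.ker (piB K B).toRingHom

/-- `m` is the leading monomial of `f ≠ 0` with respect to the order `lt` on exponent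
vectors. -/
def IsLeadMon {α K : Type*} [CommSemiring K] (lt : (α →₀ ℕ) → (α →₀ ℕ) → Prop)
    (f : MvPolynomial α K) (m : α →₀ ℕ) : Prop :=
  m ∈ f.support ∧ ∀ m' ∈ f.support, m' ≠ m → lt m' m

/-- `m` is a standard monomial of the ideal `J` with respect to the order `lt`: it is not
the leading monomial of any nonzero element of `J`. -/
def IsStdMon {α K : Type*} [CommSemiring K] (lt : (α →₀ ℕ) → (α →₀ ℕ) → Prop)
    (J : Ideal (MvPolynomial α K)) (m : α →₀ ℕ) : Prop :=
  ∀ f ∈ J, f ≠ 0 → ¬ IsLeadMon lt f m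

/-- The image in `S` of a monomial `T_{u_1} ⋯ T_{u_N}` of `R`, i.e. the product
`u_1 ⋯ u_N`. -/
noncomputable def expandB {n : ℕ} {B : Set (Mon n)} (e : ↥B →₀ ℕ) : Mon n :=
  e.sum fun u k => k • (u : Mon n)

/-- The number `N` of factors of a monomial `T_{u_1} ⋯ T_{u_N}` of `R`. -/
def edeg {n : ℕ} {B : Set (Mon n)} (e : ↥B →₀ ℕ) : ℕ := e.sum fun _ k => k

/-- `B` satisfies the σ-exchange property (with respect to the order `ltσ` on the monomials
of `S` and the order `ltR` on the monomials of `R = K[{T_u}_{u∈B}]`): whenever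
`T_{u_1}⋯T_{u_N}` and `T_{v_1}⋯T_{v_N}` are standard monomials of `J` with
`u_1⋯u_N <_σ v_1⋯v_N`, there are a factor `u_δ`, a `q ∈ supp(v_1⋯v_N)` and a
`j ∈ supp(u_δ)` with `ν_q(u_1⋯u_N) < ν_q(v_1⋯v_N)`, `x_j <_σ x_q` and
`x_q u_δ / x_j ∈ B`. -/
def SigmaExchange {n : ℕ} (K : Type*) [Field K] (B : Set (Mon n))
    (ltσ : Mon n → Mon n → Prop)
    (ltR : (↥B →₀ ℕ) → (↥B →₀ ℕ) → Prop) : Prop :=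
  ∀ e e' : ↥B →₀ ℕ, edeg e = edeg e' →
    IsStdMon ltR (toricJ K B) e → IsStdMon ltR (toricJ K B) e' →
    ltσ (expandB e) (expandB e') →
    ∃ uδ : ↥B, 0 < e uδ ∧ ∃ q j : Fin n,
      expandB e q < expandB e' q ∧
      0 < (uδ : Mon n) j ∧
      ltσ (Finsupp.single j 1) (Finsupp.single q 1) ∧
      ((uδ : Mon n) + Finsupp.single q 1 - Finsupp.single j 1) ∈ B

/-- The map `φ : 𝒯 = K[x_1,…,x_n,{T_u}_{u∈B}] → S[t]`, `x_i ↦ x_i`, `T_u ↦ u·t`; its image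
is the Rees algebra of `I = (B)`. -/
noncomputable def reesPhi {n : ℕ} (K : Type*) [Field K] (B : Set (Mon n)) :
    MvPolynomial (Fin n ⊕ ↥B) K →ₐ[K] Polynomial (MvPolynomial (Fin n) K) :=
  MvPolynomial.aeval (Sum.elim
    (fun i : Fin n => Polynomial.C (MvPolynomial.X i))
    (fun u : ↥B => Polynomial.C (MvPolynomial.monomial (u : Mon n) (1 : K)) * Polynomial.X))

/-- The toric ideal `P = ker φ` of the Rees algebra of `I = (B)`. -/
noncomputable def reesP {n : ℕ} (K : Type*) [Field K] (B : Set (Mon n)) :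
    Ideal (MvPolynomial (Fin n ⊕ ↥B) K) :=
  RingHom.ker (reesPhi K B).toRingHom

/-- `f ∈ 𝒯` only involves the variables `T_u`, i.e. `f ∈ K[{T_u}_{u∈B}]`. -/
def OnlyT {n : ℕ} {K : Type*} [Field K] {B : Set (Mon n)}
    (f : MvPolynomial (Fin n ⊕ ↥B) K) : Prop :=
  ∀ m ∈ f.support, ∀ i : Fin n, m (Sum.inl i) = 0

/-- `f ∈ 𝒯` is homogeneous of degree `1` in the variables `T_u`. -/
def TDegOne {n : ℕ} {K : Type*} [Field K] {B : Set (Mon n)}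
    (f : MvPolynomial (Fin n ⊕ ↥B) K) : Prop :=
  ∀ m ∈ f.support, (∑ s ∈ m.support, if s.isRight then m s else 0) = 1

/-- The monomial ideal `I = (B)` is of fiber type: the toric ideal `P` of its Rees algebra
is generated by `P ∩ K[{T_u}_{u∈B}]` together with the elements of `P` homogeneous of
degree `1` in the variables `T_u`. -/
def IsFiberType {n : ℕ} (K : Type*) [Field K] (B : Set (Mon n)) : Prop :=
  reesP K B =
    Ideal.span ({f | f ∈ reesP K B ∧ OnlyT f} ∪ {f | f ∈ reesP K B ∧ TDegOne f})

/-- The `S`-part of a monomial of `𝒯`. -/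
noncomputable def sPart {n : ℕ} {B : Set (Mon n)} (m : (Fin n ⊕ ↥B) →₀ ℕ) : Mon n :=
  (Finsupp.sumFinsuppEquivProdFinsupp m).1

/-- The `T`-part of a monomial of `𝒯`. -/
noncomputable def tPart {n : ℕ} {B : Set (Mon n)} (m : (Fin n ⊕ ↥B) →₀ ℕ) : ↥B →₀ ℕ :=
  (Finsupp.sumFinsuppEquivProdFinsupp m).2

/-- The product order `<_σ^#` on the monomials of `𝒯 = K[x_1,…,x_n,{T_u}_{u∈B}]`. -/
def ProdLT {n : ℕ} {B : Set (Mon n)} (ltσ : Mon n → Mon n → Prop)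
    (ltR : (↥B →₀ ℕ) → (↥B →₀ ℕ) → Prop)
    (m m' : (Fin n ⊕ ↥B) →₀ ℕ) : Prop :=
  ltσ (sPart m) (sPart m') ∨ (sPart m = sPart m' ∧ ltR (tPart m) (tPart m'))

/-- `G` is a Gröbner basis of the ideal `P` with respect to the order `lt`: the leading
monomial of every nonzero `f ∈ P` is divisible by the leading monomial of some element
of `G`. -/
def IsGB {α K : Type*} [CommSemiring K] (lt : (α →₀ ℕ) → (α →₀ ℕ) → Prop)
    (P : Ideal (MvPolynomial α K)) (G : Set (MvPolynomial α K)) : Prop :=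
  ∀ f ∈ P, f ≠ 0 → ∃ g ∈ G, g ≠ 0 ∧
    ∃ mg mf, IsLeadMon lt g mg ∧ IsLeadMon lt f mf ∧ mg ≤ mf

/-! ### Monomial orders and leading monomials -/

section Orders

variable {α : Type*}

theorem MonOrd.asymm (o : MonOrd α) {a b : α →₀ ℕ} (h : o.lt a b) : ¬ o.lt b a :=
  fun h' => o.irrefl _ (o.trans _ _ _ h h')

theorem MonOrd.add_lt_add (o : MonOrd α) {a b c d : α →₀ ℕ} (h : o.lt a b) (h' : o.lt c d) :
    o.lt (a + c) (b + d) := by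
  refine o.trans _ _ _ (o.add_right _ _ c h) ?_
  rw [add_comm b c, add_comm b d]
  exact o.add_right _ _ b h'

theorem MonOrd.isStrictOrder (o : MonOrd α) : IsStrictOrder (α →₀ ℕ) o.lt where
  irrefl := o.irrefl
  trans := o.trans

theorem IsLeadMon.unique {K : Type*} [CommSemiring K] (o : MonOrd α) {f : MvPolynomial α K}
    {m m' : α →₀ ℕ} (h : IsLeadMon o.lt f m) (h' : IsLeadMon o.lt f m') : m = m' := by
  by_contra hne
  exact o.asymm (h.2 _ h'.1 (Ne.symm hne)) (h'.2 _ h.1 hne)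

/-- A nonzero polynomial has a leading monomial: on the finite support, the reverse of a strict
order is well founded. -/
theorem exists_isLeadMon {K : Type*} [CommSemiring K] (lt : (α →₀ ℕ) → (α →₀ ℕ) → Prop)
    (hirr : ∀ a, ¬ lt a a) (htrans : ∀ a b c, lt a b → lt b c → lt a c)
    (htot : ∀ a b, a ≠ b → lt a b ∨ lt b a) {f : MvPolynomial α K} (hf : f ≠ 0) :
    ∃ m, IsLeadMon lt f m := by
  have : IsStrictOrder (α →₀ ℕ) (fun a b => lt b a) :=
    { irrefl := hirr, trans := fun a b c h h' => htrans _ _ _ h' h }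
  have hwf := (f.support.finite_toSet).wellFoundedOn (r := fun a b => lt b a)
  obtain ⟨m, hm⟩ := MvPolynomial.support_nonempty.2 hf
  have hw : WellFounded (fun a b : (f.support : Set (α →₀ ℕ)) => lt b.1 a.1) := hwf
  obtain ⟨x, -, hx⟩ := hw.has_min Set.univ ⟨⟨m, hm⟩, trivial⟩
  refine ⟨x.1, x.2, fun m' hm' hne => ?_⟩
  exact (htot _ _ hne).resolve_right (hx ⟨m', hm'⟩ trivial)

/-- If a linear functional sums the coefficients over the monomials satisfying `p` and vanishes on
`f`, then `f` cannot have exactly one monomial satisfying `p`. -/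
theorem exists_ne_mem_support_of_apply_eq_zero {K : Type*} [Field K]
    (L : MvPolynomial α K →ₗ[K] K) (p : (α →₀ ℕ) → Prop)
    (hL1 : ∀ m, p m → L (MvPolynomial.monomial m 1) = 1)
    (hL0 : ∀ m, ¬ p m → L (MvPolynomial.monomial m 1) = 0)
    {f : MvPolynomial α K} (hf : L f = 0) {m : α →₀ ℕ} (hm : m ∈ f.support) (hpm : p m) :
    ∃ m' ∈ f.support, m' ≠ m ∧ p m' := by
  by_contra! hcon
  have hterm : ∀ m' c, L (MvPolynomial.monomial m' c) = c * L (MvPolynomial.monomial m' 1) := by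
    intro m' c
    rw [← smul_eq_mul, ← map_smul, MvPolynomial.smul_monomial, smul_eq_mul, mul_one]
  rw [MvPolynomial.as_sum f, map_sum, Finset.sum_eq_single m, hterm, hL1 m hpm, mul_one] at hf
  · exact MvPolynomial.mem_support_iff.1 hm hf
  · intro m' hm' hne
    rw [hterm, hL0 m' (hcon m' hm' hne), mul_zero]
  · exact fun h => absurd hm h

theorem isLeadMon_monomial_sub {K : Type*} [Field K] {lt : (α →₀ ℕ) → (α →₀ ℕ) → Prop}
    {m m' : α →₀ ℕ} (hne : m' ≠ m) (h : lt m' m) :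
    IsLeadMon lt (MvPolynomial.monomial m (1 : K) - MvPolynomial.monomial m' 1) m := by
  classical
  constructor
  · simp [MvPolynomial.mem_support_iff, MvPolynomial.coeff_monomial, hne]
  · intro m'' hm'' hne'
    have : m'' = m' := by
      by_contra hc
      simp [MvPolynomial.coeff_monomial, Ne.symm hne', Ne.symm hc] at hm''
    exact this ▸ h

end Orders

/-! ### Images and parts of monomials -/

section Images

variable {n : ℕ} {B : Set (Mon n)}

theorem expandB_add (e e' : ↥B →₀ ℕ) : expandB (e + e') = expandB e + expandB e' := by
  classical
  exact Finsupp.sum_add_index' (by simp) (by intros; rw [add_smul])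

theorem edeg_add (e e' : ↥B →₀ ℕ) : edeg (e + e') = edeg e + edeg e' := by
  classical
  exact Finsupp.sum_add_index' (by simp) (by simp)

theorem expandB_zero : expandB (0 : ↥B →₀ ℕ) = 0 := Finsupp.sum_zero_index

theorem edeg_zero : edeg (0 : ↥B →₀ ℕ) = 0 := Finsupp.sum_zero_index

theorem expandB_single (u : ↥B) (k : ℕ) :
    expandB (Finsupp.single u k) = k • (u : Mon n) := Finsupp.sum_single_index (by simp)

theorem edeg_single (u : ↥B) (k : ℕ) : edeg (Finsupp.single u k) = k :=
  Finsupp.sum_single_index (by simp)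

theorem mdeg_add (m m' : Mon n) : mdeg (m + m') = mdeg m + mdeg m' := by
  simp [mdeg, Finset.sum_add_distrib]

theorem mdeg_expandB {d : ℕ} (hBd : ∀ m ∈ B, mdeg m = d) (e : ↥B →₀ ℕ) :
    mdeg (expandB e) = d * edeg e := by
  induction e using Finsupp.induction_linear with
  | zero => simp [expandB_zero, edeg_zero, mdeg]
  | add e e' h h' => rw [expandB_add, edeg_add, mdeg_add, h, h', mul_add]
  | single u k =>
    have := hBd u u.2
    rw [expandB_single, edeg_single, ← this]
    simp [mdeg, Finset.mul_sum, mul_comm]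

theorem mdeg_eq_zero {m : Mon n} (h : mdeg m = 0) : m = 0 := by
  ext i
  exact Finset.sum_eq_zero_iff.1 h i (Finset.mem_univ i)

theorem sPart_apply (m : (Fin n ⊕ ↥B) →₀ ℕ) (i : Fin n) : sPart m i = m (Sum.inl i) := rfl

theorem tPart_apply (m : (Fin n ⊕ ↥B) →₀ ℕ) (u : ↥B) : tPart m u = m (Sum.inr u) := rfl

theorem sPart_add (m m' : (Fin n ⊕ ↥B) →₀ ℕ) : sPart (m + m') = sPart m + sPart m' := by
  ext; simp [sPart_apply]

theorem tPart_add (m m' : (Fin n ⊕ ↥B) →₀ ℕ) : tPart (m + m') = tPart m + tPart m' := by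
  ext; simp [tPart_apply]

theorem sPart_single_inl (i : Fin n) (k : ℕ) :
    sPart (Finsupp.single (Sum.inl i : Fin n ⊕ ↥B) k) = Finsupp.single i k := by
  classical
  ext; simp [sPart_apply, Finsupp.single_apply]

theorem tPart_single_inl (i : Fin n) (k : ℕ) :
    tPart (Finsupp.single (Sum.inl i : Fin n ⊕ ↥B) k) = 0 := by
  classical
  ext; simp [tPart_apply]

theorem sPart_single_inr (u : ↥B) (k : ℕ) :
    sPart (Finsupp.single (Sum.inr u : Fin n ⊕ ↥B) k) = 0 := by
  classical
  ext; simp [sPart_apply]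

theorem tPart_single_inr (u : ↥B) (k : ℕ) :
    tPart (Finsupp.single (Sum.inr u : Fin n ⊕ ↥B) k) = Finsupp.single u k := by
  classical
  ext; simp [tPart_apply, Finsupp.single_apply]

theorem sPart_zero : sPart (0 : (Fin n ⊕ ↥B) →₀ ℕ) = 0 := by
  ext; simp [sPart_apply]

theorem tPart_zero : tPart (0 : (Fin n ⊕ ↥B) →₀ ℕ) = 0 := by
  ext; simp [tPart_apply]

theorem sPart_mapDomain_inr (e : ↥B →₀ ℕ) :
    sPart (e.mapDomain (Sum.inr : ↥B → Fin n ⊕ ↥B)) = 0 := by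
  ext i
  rw [sPart_apply, Finsupp.mapDomain_of_notMem_range _ _ (by simp)]
  rfl

theorem tPart_mapDomain_inr (e : ↥B →₀ ℕ) :
    tPart (e.mapDomain (Sum.inr : ↥B → Fin n ⊕ ↥B)) = e := by
  ext u
  rw [tPart_apply, Finsupp.mapDomain_apply Sum.inr_injective]

theorem eq_of_sPart_of_tPart {m m' : (Fin n ⊕ ↥B) →₀ ℕ} (hs : sPart m = sPart m')
    (ht : tPart m = tPart m') : m = m' :=
  Finsupp.sumFinsuppEquivProdFinsupp.injective (Prod.ext hs ht)

/-! ### The toric ideals `J` and `P` -/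

variable (K : Type*) [Field K]

theorem piB_monomial (e : ↥B →₀ ℕ) :
    piB K B (MvPolynomial.monomial e 1) = MvPolynomial.monomial (expandB e) 1 := by
  induction e using Finsupp.induction_linear with
  | zero => simp [expandB_zero]
  | add e e' h h' =>
    rw [expandB_add, ← one_mul (1 : K), ← MvPolynomial.monomial_mul, map_mul,
      ← MvPolynomial.monomial_mul, h, h']
  | single u k =>
    rw [expandB_single, piB, MvPolynomial.aeval_monomial,
      Finsupp.prod_single_index (by simp), MvPolynomial.monomial_pow]
    simp

theorem reesPhi_monomial (m : (Fin n ⊕ ↥B) →₀ ℕ) :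
    reesPhi K B (MvPolynomial.monomial m 1) =
      Polynomial.monomial (edeg (tPart m))
        (MvPolynomial.monomial (sPart m + expandB (tPart m)) 1) := by
  induction m using Finsupp.induction_linear with
  | zero => simp [sPart_zero, tPart_zero, expandB_zero, edeg_zero]
  | add m m' h h' =>
    have hadd : sPart (m + m') + expandB (tPart (m + m')) =
        (sPart m + expandB (tPart m)) + (sPart m' + expandB (tPart m')) := by
      rw [sPart_add, tPart_add, expandB_add]; abel
    rw [hadd, tPart_add, edeg_add, ← one_mul (1 : K), ← MvPolynomial.monomial_mul, map_mul,
      ← MvPolynomial.monomial_mul, h, h', Polynomial.monomial_mul_monomial]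
  | single s k =>
    rw [reesPhi, MvPolynomial.aeval_monomial, Finsupp.prod_single_index (by simp)]
    rcases s with i | u
    · rw [sPart_single_inl, tPart_single_inl, edeg_zero, expandB_zero, add_zero,
        Polynomial.monomial_zero_left, ← MvPolynomial.X_pow_eq_monomial]
      simp
    · rw [sPart_single_inr, tPart_single_inr, edeg_single, expandB_single, zero_add, Sum.elim_inr,
        mul_pow, ← Polynomial.C_pow, MvPolynomial.monomial_pow, Polynomial.C_mul_X_pow_eq_monomial]
      simp

theorem mem_toricJ {f : MvPolynomial ↥B K} : f ∈ toricJ K B ↔ piB K B f = 0 := Iff.rfl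

theorem mem_reesP {f : MvPolynomial (Fin n ⊕ ↥B) K} :
    f ∈ reesP K B ↔ reesPhi K B f = 0 := Iff.rfl

theorem exists_ne_of_mem_toricJ {f : MvPolynomial ↥B K} (hf : f ∈ toricJ K B) {e : ↥B →₀ ℕ}
    (he : e ∈ f.support) : ∃ e' ∈ f.support, e' ≠ e ∧ expandB e' = expandB e := by
  classical
  refine exists_ne_mem_support_of_apply_eq_zero
    ((MvPolynomial.lcoeff K (expandB e)).comp (piB K B).toLinearMap)
    (fun e' => expandB e' = expandB e) ?_ ?_ ?_ he rfl
  · intro m hm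
    simp [piB_monomial, MvPolynomial.coeff_monomial, hm]
  · intro m hm
    simp [piB_monomial, MvPolynomial.coeff_monomial, hm]
  · simp [(mem_toricJ K).1 hf]

theorem exists_ne_of_mem_reesP {f : MvPolynomial (Fin n ⊕ ↥B) K} (hf : f ∈ reesP K B)
    {m : (Fin n ⊕ ↥B) →₀ ℕ} (hm : m ∈ f.support) :
    ∃ m' ∈ f.support, m' ≠ m ∧ edeg (tPart m') = edeg (tPart m) ∧
      sPart m' + expandB (tPart m') = sPart m + expandB (tPart m) := by
  classical
  refine exists_ne_mem_support_of_apply_eq_zero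
    ((MvPolynomial.lcoeff K (sPart m + expandB (tPart m))).comp
      (((Polynomial.lcoeff (MvPolynomial (Fin n) K) (edeg (tPart m))).restrictScalars K).comp
        (reesPhi K B).toLinearMap))
    (fun m' => edeg (tPart m') = edeg (tPart m) ∧
      sPart m' + expandB (tPart m') = sPart m + expandB (tPart m)) ?_ ?_ ?_ hm ⟨rfl, rfl⟩
  · rintro m' ⟨h1, h2⟩
    simp [reesPhi_monomial, MvPolynomial.coeff_monomial, h1, h2]
  · intro m' h
    by_cases h1 : edeg (tPart m') = edeg (tPart m)
    · have h2 : ¬ _ := fun h2 => h ⟨h1, h2⟩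
      simp [reesPhi_monomial, MvPolynomial.coeff_monomial, h1, h2]
    · simp [reesPhi_monomial, Polynomial.coeff_monomial, h1]
  · simp [(mem_reesP K).1 hf]

theorem monomial_sub_mem_toricJ {e e' : ↥B →₀ ℕ} (h : expandB e = expandB e') :
    MvPolynomial.monomial e (1 : K) - MvPolynomial.monomial e' 1 ∈ toricJ K B := by
  rw [mem_toricJ, map_sub, piB_monomial, piB_monomial, h, sub_self]

theorem monomial_sub_mem_reesP {m m' : (Fin n ⊕ ↥B) →₀ ℕ}
    (hd : edeg (tPart m) = edeg (tPart m'))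
    (h : sPart m + expandB (tPart m) = sPart m' + expandB (tPart m')) :
    MvPolynomial.monomial m (1 : K) - MvPolynomial.monomial m' 1 ∈ reesP K B := by
  rw [mem_reesP, map_sub, reesPhi_monomial, reesPhi_monomial, h, hd, sub_self]

/-- Monomials of `R` with a fixed number of factors form a finite set, since there are only
finitely many monomials of degree `d`. -/
theorem finite_edeg_eq {d : ℕ} (hBd : ∀ m ∈ B, mdeg m = d) (N : ℕ) :
    {e : ↥B →₀ ℕ | edeg e = N}.Finite := by
  have hB : B.Finite := by
    refine (Set.finite_Iic (Finsupp.equivFunOnFinite.symm fun _ : Fin n => d)).subset ?_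
    intro m hm i
    rw [← hBd m hm]
    exact Finset.single_le_sum (f := fun i => m i) (by simp) (Finset.mem_univ i)
  have := hB.to_subtype
  classical
  have := Fintype.ofFinite ↥B
  refine (Set.finite_Iic (Finsupp.equivFunOnFinite.symm fun _ : ↥B => N)).subset ?_
  intro e he u
  have he' : edeg e = N := he
  rw [edeg, Finsupp.sum_fintype _ _ (by simp)] at he'
  simpa [← he'] using Finset.single_le_sum (f := fun i => e i) (by simp) (Finset.mem_univ u)

/-! ### Standard monomials and leading monomials in the product order -/

/-- Every fiber of `π` contains a standard monomial, namely its smallest element. For `d = 0` the number of factors is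
not determined by the image, whence the hypothesis `d ≠ 0`. -/
theorem exists_isStdMon {d : ℕ} (hd : d ≠ 0) (hBd : ∀ m ∈ B, mdeg m = d) (o : MonOrd ↥B)
    (e : ↥B →₀ ℕ) :
    ∃ e', edeg e' = edeg e ∧ expandB e' = expandB e ∧ IsStdMon o.lt (toricJ K B) e' := by
  have := o.isStrictOrder
  have hw : WellFounded (fun a b : {e' : ↥B →₀ ℕ | edeg e' = edeg e} => o.lt a.1 b.1) :=
    (finite_edeg_eq hBd (edeg e)).wellFoundedOn (r := o.lt)
  obtain ⟨x, hx, hmin⟩ := hw.has_min {x | expandB x.1 = expandB e} ⟨⟨e, rfl⟩, rfl⟩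
  refine ⟨x.1, x.2, hx, fun g hg _ hlead => ?_⟩
  obtain ⟨y, hy, hne, hyx⟩ := exists_ne_of_mem_toricJ K hg hlead.1
  have hye : expandB y = expandB e := hyx.trans hx
  have hdeg : edeg y = edeg e := by
    have h := congrArg mdeg hye
    rw [mdeg_expandB hBd, mdeg_expandB hBd] at h
    exact Nat.eq_of_mul_eq_mul_left (Nat.pos_of_ne_zero hd) h
  exact hmin ⟨y, hdeg⟩ hye (hlead.2 y hy hne)

theorem exists_isLeadMon_prodLT (σ : MonOrd (Fin n)) (o : MonOrd ↥B)
    {f : MvPolynomial (Fin n ⊕ ↥B) K} (hf : f ≠ 0) :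
    ∃ m, IsLeadMon (ProdLT σ.lt o.lt) f m := by
  refine exists_isLeadMon _ ?_ ?_ ?_ hf
  · rintro a (h | h)
    · exact σ.irrefl _ h
    · exact o.irrefl _ h.2
  · rintro a b c (h | ⟨h1, h2⟩) (h' | ⟨h1', h2'⟩)
    · exact Or.inl (σ.trans _ _ _ h h')
    · exact Or.inl (h1' ▸ h)
    · exact Or.inl (h1 ▸ h')
    · exact Or.inr ⟨h1.trans h1', o.trans _ _ _ h2 h2'⟩
  · intro a b hne
    by_cases hs : sPart a = sPart b
    · have ht : tPart a ≠ tPart b := fun ht => hne (eq_of_sPart_of_tPart hs ht)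
      exact (o.total _ _ ht).imp (fun h => Or.inr ⟨hs, h⟩) (fun h => Or.inr ⟨hs.symm, h⟩)
    · exact (σ.total _ _ hs).imp Or.inl Or.inl

theorem IsLeadMon.rename_inr (ltσ : Mon n → Mon n → Prop) {ltR : (↥B →₀ ℕ) → (↥B →₀ ℕ) → Prop}
    {g : MvPolynomial ↥B K} {e : ↥B →₀ ℕ} (h : IsLeadMon ltR g e) :
    IsLeadMon (ProdLT ltσ ltR) (MvPolynomial.rename (Sum.inr : ↥B → Fin n ⊕ ↥B) g)
      (e.mapDomain Sum.inr) := by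
  classical
  rw [IsLeadMon, MvPolynomial.support_rename_of_injective Sum.inr_injective]
  refine ⟨Finset.mem_image_of_mem _ h.1, fun m hm hne => ?_⟩
  obtain ⟨e', he', rfl⟩ := Finset.mem_image.1 hm
  right
  rw [sPart_mapDomain_inr, sPart_mapDomain_inr, tPart_mapDomain_inr, tPart_mapDomain_inr]
  exact ⟨rfl, h.2 e' he' fun h' => hne (by rw [h'])⟩

end Images

/-! ### The Gröbner basis of `P` -/

/-- let `I ⊂ S` be a monomial ideal generated in degree `d` with minimal
monomial generating set `B`, satisfying the σ-exchange property with respect to a monomial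
order `<^#` on `R` and a monomial order `<_σ` on `S`.  If `G₀` is a Gröbner basis of the
toric ideal `J = ker π` with respect to `<^#`, then `G₀` (viewed inside `𝒯`) together with
all binomials `x_i T_u - x_j T_v ∈ P` with `x_i >_σ x_j` is a Gröbner basis of `P = ker φ`
with respect to the product order `<_σ^#`. -/
theorem stmt8 {n : ℕ} (hn : 0 < n) (K : Type*) [Field K]
    (d : ℕ) (B : Set (Mon n)) (hBne : B.Nonempty) (hBd : ∀ m ∈ B, mdeg m = d)
    (σ : MonOrd (Fin n)) (o : MonOrd ↥B)
    (hex : SigmaExchange K B σ.lt o.lt)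
    (G₀ : Set (MvPolynomial ↥B K))
    (hG₀J : ∀ g ∈ G₀, g ∈ toricJ K B)
    (hG₀ : IsGB o.lt (toricJ K B) G₀) :
    IsGB (ProdLT σ.lt o.lt) (reesP K B)
      ((fun g => MvPolynomial.rename (Sum.inr : ↥B → Fin n ⊕ ↥B) g) '' G₀ ∪
        {f | ∃ (i j : Fin n) (a b : ↥B),
          σ.lt (Finsupp.single j 1) (Finsupp.single i 1) ∧
          f = MvPolynomial.X (Sum.inl i) * MvPolynomial.X (Sum.inr a) -
              MvPolynomial.X (Sum.inl j) * MvPolynomial.X (Sum.inr b) ∧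
          f ∈ reesP K B}) := by
  intro f hf hf0
  obtain ⟨m, hm⟩ := exists_isLeadMon_prodLT K σ o hf0
  by_cases hstd : IsStdMon o.lt (toricJ K B) (tPart m)
  · obtain ⟨m', hm', hne, hdeg, himg⟩ := exists_ne_of_mem_reesP K hf hm.1
    have hlt : σ.lt (sPart m') (sPart m) := by
      rcases hm.2 m' hm' hne with h | ⟨hs, ht⟩
      · exact h
      · exfalso
        rw [hs] at himg
        have hlead := isLeadMon_monomial_sub (K := K) (lt := o.lt)
          (fun h => o.irrefl _ (h ▸ ht)) ht
        exact hstd _ (monomial_sub_mem_toricJ K (add_left_cancel himg).symm)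
          (MvPolynomial.support_nonempty.1 ⟨_, hlead.1⟩) hlead
    have hd : d ≠ 0 := by
      rintro rfl
      have h0 : ∀ e : ↥B →₀ ℕ, expandB e = 0 := fun e =>
        mdeg_eq_zero (by rw [mdeg_expandB hBd, zero_mul])
      rw [h0, h0, add_zero, add_zero] at himg
      exact σ.irrefl _ (himg ▸ hlt)
    obtain ⟨e', hdeg', himg', hstd'⟩ := exists_isStdMon K hd hBd o (tPart m')
    rw [← himg'] at himg
    have hlt' : σ.lt (expandB (tPart m)) (expandB e') := by
      by_contra hcon
      have h : σ.lt (sPart m' + expandB e') (sPart m + expandB (tPart m)) := by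
        by_cases heq : expandB e' = expandB (tPart m)
        · rw [heq]
          exact σ.add_right _ _ _ hlt
        · exact σ.add_lt_add hlt ((σ.total _ _ heq).resolve_right hcon)
      exact σ.irrefl _ (himg ▸ h)
    obtain ⟨u, hu, q, j, hq, hj, hjq, hw⟩ :=
      hex (tPart m) e' (hdeg.symm.trans hdeg'.symm) hstd hstd' hlt'
    have hqm : 0 < sPart m q := by
      have := DFunLike.congr_fun himg q
      simp only [Finsupp.add_apply] at this
      omega
    set w : ↥B := ⟨_, hw⟩ with hwdef
    have hbin : (MvPolynomial.X (Sum.inl q) * MvPolynomial.X (Sum.inr u) -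
        MvPolynomial.X (Sum.inl j) * MvPolynomial.X (Sum.inr w) :
          MvPolynomial (Fin n ⊕ ↥B) K) =
        MvPolynomial.monomial (Finsupp.single (Sum.inl q) 1 + Finsupp.single (Sum.inr u) 1) 1 -
        MvPolynomial.monomial (Finsupp.single (Sum.inl j) 1 + Finsupp.single (Sum.inr w) 1) 1 := by
      simp [MvPolynomial.X, MvPolynomial.monomial_mul]
    have hlt2 : ProdLT σ.lt o.lt
        (Finsupp.single (Sum.inl j) 1 + Finsupp.single (Sum.inr w) 1)
        (Finsupp.single (Sum.inl q) 1 + Finsupp.single (Sum.inr u) 1) := by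
      left
      simpa only [sPart_add, sPart_single_inl, sPart_single_inr, add_zero] using hjq
    have hne2 : (Finsupp.single (Sum.inl j) 1 + Finsupp.single (Sum.inr w) 1 :
        (Fin n ⊕ ↥B) →₀ ℕ) ≠ Finsupp.single (Sum.inl q) 1 + Finsupp.single (Sum.inr u) 1 := by
      intro h
      have := congrArg sPart h
      simp only [sPart_add, sPart_single_inl, sPart_single_inr, add_zero] at this
      exact σ.irrefl _ (this ▸ hjq)
    have hlead := isLeadMon_monomial_sub (K := K) hne2 hlt2
    refine ⟨_, Or.inr ⟨q, j, u, w, hjq, rfl, ?_⟩, ?_, _, m, hbin ▸ hlead, hm, ?_⟩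
    · rw [hbin]
      refine monomial_sub_mem_reesP K ?_ ?_
      · simp only [tPart_add, tPart_single_inl, tPart_single_inr, zero_add, edeg_single]
      · simp only [sPart_add, sPart_single_inl, sPart_single_inr, tPart_add, tPart_single_inl,
          tPart_single_inr, zero_add, add_zero, expandB_single, one_smul, hwdef]
        -- the truncated subtraction defining `w` is exact because `x_j` divides `u`
        rw [add_tsub_cancel_of_le, add_comm]
        exact (Finsupp.single_le_iff.2 hj).trans le_self_add
    · rw [hbin]
      exact MvPolynomial.support_nonempty.1 ⟨_, hlead.1⟩
    · classical
      rintro (i | v)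
      · have : Finsupp.single q 1 ≤ sPart m := Finsupp.single_le_iff.2 hqm
        simpa [Finsupp.single_apply, sPart_apply] using this i
      · have : Finsupp.single u 1 ≤ tPart m := Finsupp.single_le_iff.2 hu
        simpa [Finsupp.single_apply, tPart_apply] using this v
  · simp only [IsStdMon, not_forall, not_not] at hstd
    obtain ⟨h, hhJ, hh0, hlead⟩ := hstd
    obtain ⟨g, hgG, hg0, mg, mh, hmg, hmh, hle⟩ := hG₀ h hhJ hh0
    rw [hmh.unique o hlead] at hle
    refine ⟨_, Or.inl ⟨g, hgG, rfl⟩, ?_, _, m, hmg.rename_inr K σ.lt, hm, ?_⟩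
    · exact MvPolynomial.support_nonempty.1 ⟨_, (hmg.rename_inr K σ.lt).1⟩
    · rintro (i | v)
      · rw [← sPart_apply, sPart_mapDomain_inr]
        exact Nat.zero_le _
      · rw [← tPart_apply, tPart_mapDomain_inr]
        exact hle v
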